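/- arXiv:1508.07408 — 2 statements merged into one kernel-verified Lean document; each statement's English description precedes it below -/
import Mathlib

section
/- (Maximum principle, negative λ.) Let α ≥ 1, set ν = (1−α)/2, let λ < 0, let 0 < η < 1, and suppose (H_0') holds: δ > 0, K_ν(√|λ|) − δ·η^ν·K_ν(η·√|λ|) ≤ 0, and I_{−ν}(√|λ|) − δ·η^ν·I_{−ν}(η·√|λ|) > 0. If y : [0,1] → ℝ is continuous on [0,1], continuously differentiable on [0,1], twice differentiable on (0,1), and satisfies −(x^α·y'(x))' − λ·x^α·y(x) ≥ 0 for all x ∈ (0,1), y'(0) = 0, and y(1) ≥ δ·y(η), then y(x) ≥ 0 for all x ∈ [0,1]. -/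
/-- The modified Bessel function of the first kind of real order `μ`. -/
noncomputable def besselI (μ x : ℝ) : ℝ :=
  ∑' m : ℕ, (1 / ((m.factorial : ℝ) * Real.Gamma ((m : ℝ) + μ + 1))) *
    (x / 2) ^ (2 * (m : ℝ) + μ)

/-- The modified Bessel function of the second kind of real order `μ`,
`K_μ(x) = ∫_0^∞ e^{−x·cosh t}·cosh(μt) dt`. -/
noncomputable def besselK (μ x : ℝ) : ℝ :=
  ∫ t in Set.Ioi (0 : ℝ), Real.exp (-(x * Real.cosh t)) * Real.cosh (μ * t)

/-!
Writing `I_μ(x) = (x/2)^μ C_μ(x²/4)` with `C_μ` the entire Bessel–Clifford function, the relations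
`C_μ' = C_{μ+1}` and `t C_{μ+2} + (μ+1) C_{μ+1} = C_μ` show that `f(x) = C_{-ν}(|λ|x²/4)` is a
positive solution of `(x^α f')' = |λ| x^α f` whose flux `x^α f'` vanishes at `0`. For a
supersolution `y` whose flux also vanishes at `0`, the weighted Wronskian `x^α (y' f - y f')` is
antitone and starts from `0`, so it is nonpositive and `y / f` is antitone. The condition on
`I_{-ν}` says `δ f(η) < f(1)`; together with `δ y(η) ≤ y(1)` it forces `y(1) / f(1) ≥ 0`, and
hence `y / f ≥ 0` on `[0, 1]`.
-/

open Set Filter Topology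
open FormalMultilinearSeries (ofScalars)

section PowerSeries

variable {𝕜 : Type*} [NontriviallyNormedField 𝕜] [CompleteSpace 𝕜] {a : ℕ → 𝕜}

lemma summable_mul_pow_of_radius_eq_top (ha : (ofScalars 𝕜 a).radius = ⊤) (t : 𝕜) :
    Summable fun m => a m * t ^ m := by
  have h := (ofScalars 𝕜 a).summable (x := t) (by simp [ha])
  simpa only [FormalMultilinearSeries.ofScalars_apply_eq, smul_eq_mul] using h

lemma hasFPowerSeriesOnBall_tsum_mul_pow (ha : (ofScalars 𝕜 a).radius = ⊤) :
    HasFPowerSeriesOnBall (fun t => ∑' m, a m * t ^ m) (ofScalars 𝕜 a) 0 ⊤ := by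
  have h := (ofScalars 𝕜 a).hasFPowerSeriesOnBall (by simp [ha])
  rw [ha] at h
  exact h.congr fun t _ => FormalMultilinearSeries.ofScalars_sum_eq a t

lemma hasSum_deriv_tsum_mul_pow (ha : (ofScalars 𝕜 a).radius = ⊤) (t : 𝕜) :
    HasSum (fun m : ℕ => ((m + 1) * a (m + 1)) * t ^ m)
      (deriv (fun t => ∑' m, a m * t ^ m) t) := by
  have h := ((hasFPowerSeriesOnBall_tsum_mul_pow ha).fderiv.hasSum (y := t) (by simp)).mapL
    (ContinuousLinearMap.apply 𝕜 𝕜 (1 : 𝕜))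
  rw [zero_add, ContinuousLinearMap.apply_apply, fderiv_apply_one_eq_deriv] at h
  refine h.congr_fun fun m => ?_
  rw [ContinuousLinearMap.apply_apply, FormalMultilinearSeries.apply_eq_pow_smul_coeff,
    smul_apply, FormalMultilinearSeries.derivSeries_coeff_one,
    FormalMultilinearSeries.coeff_ofScalars, smul_eq_mul, nsmul_eq_mul]
  push_cast
  ring

lemma hasDerivAt_tsum_mul_pow (ha : (ofScalars 𝕜 a).radius = ⊤) (t : 𝕜) :
    HasDerivAt (fun t => ∑' m, a m * t ^ m) (∑' m : ℕ, ((m + 1) * a (m + 1)) * t ^ m) t := by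
  rw [(hasSum_deriv_tsum_mul_pow ha t).tsum_eq]
  exact ((hasFPowerSeriesOnBall_tsum_mul_pow ha).analyticAt_of_mem
    (by simp)).differentiableAt.hasDerivAt

lemma summable_natCast_mul_mul_pow (ha : (ofScalars 𝕜 a).radius = ⊤) (t : 𝕜) :
    Summable fun m : ℕ => (m * a m) * t ^ m := by
  rw [← summable_nat_add_iff 1]
  refine ((hasSum_deriv_tsum_mul_pow ha t).summable.mul_left t).congr fun m => ?_
  push_cast
  ring

lemma mul_tsum_succ_mul_pow (ha : (ofScalars 𝕜 a).radius = ⊤) (t : 𝕜) :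
    t * ∑' m : ℕ, ((m + 1) * a (m + 1)) * t ^ m = ∑' m : ℕ, (m * a m) * t ^ m := by
  rw [(summable_natCast_mul_mul_pow ha t).tsum_eq_zero_add, ← tsum_mul_left]
  simp only [Nat.cast_zero, zero_mul, zero_add, Nat.cast_add_one, pow_succ]
  exact tsum_congr fun m => by ring

end PowerSeries

lemma tendsto_rpow_mul_nhdsGT_zero {α l : ℝ} {g : ℝ → ℝ} (hα : 0 < α)
    (hg : Tendsto g (𝓝[>] 0) (𝓝 l)) : Tendsto (fun x => x ^ α * g x) (𝓝[>] 0) (𝓝 0) := by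
  have hpow : Tendsto (fun x : ℝ => x ^ α) (𝓝[>] 0) (𝓝 0) := by
    simpa [Real.zero_rpow hα.ne'] using
      ((Real.continuous_rpow_const hα.le).tendsto 0).mono_left nhdsWithin_le_nhds
  simpa using hpow.mul hg

lemma inv_Gamma_eq_mul_inv_Gamma_add_one (s : ℝ) :
    (Real.Gamma s)⁻¹ = s * (Real.Gamma (s + 1))⁻¹ := by
  have h := Complex.one_div_Gamma_eq_self_mul_one_div_Gamma_add_one (s : ℂ)
  rw [← Complex.ofReal_one, ← Complex.ofReal_add, Complex.Gamma_ofReal, Complex.Gamma_ofReal] at h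
  exact_mod_cast h

section BesselClifford

/-- The Taylor coefficients at `0` of the Bessel–Clifford function. Where `Γ` has a pole the
division by `0` gives the intended value `0`. -/
noncomputable def besselCliffordCoeff (μ : ℝ) (m : ℕ) : ℝ :=
  1 / ((m.factorial : ℝ) * Real.Gamma (m + μ + 1))

/-- The Bessel–Clifford function `C_μ(t) = ∑ tᵐ / (m! Γ(m+μ+1))`, the entire function through which
`I_μ(x) = (x/2)^μ C_μ(x²/4)`. -/
noncomputable def besselClifford (μ t : ℝ) : ℝ :=
  ∑' m, besselCliffordCoeff μ m * t ^ m

lemma besselCliffordCoeff_pos {μ : ℝ} {m : ℕ} (h : 0 < m + μ + 1) :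
    0 < besselCliffordCoeff μ m :=
  one_div_pos.2 (mul_pos (by positivity) (Real.Gamma_pos_of_pos h))

lemma succ_mul_besselCliffordCoeff_succ (μ : ℝ) (m : ℕ) :
    (m + 1) * besselCliffordCoeff μ (m + 1) = besselCliffordCoeff (μ + 1) m := by
  rw [besselCliffordCoeff, besselCliffordCoeff,
    show ((m + 1 : ℕ) : ℝ) + μ + 1 = m + (μ + 1) + 1 by push_cast; ring, Nat.factorial_succ]
  push_cast
  field_simp

lemma add_mul_besselCliffordCoeff_add_one (μ : ℝ) (m : ℕ) :
    (m + μ + 1) * besselCliffordCoeff (μ + 1) m = besselCliffordCoeff μ m := by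
  have hΓ := inv_Gamma_eq_mul_inv_Gamma_add_one (m + μ + 1)
  rw [besselCliffordCoeff, besselCliffordCoeff, one_div, one_div, mul_inv, mul_inv, hΓ,
    show (m : ℝ) + (μ + 1) + 1 = m + μ + 1 + 1 by ring]
  ring

lemma radius_besselCliffordCoeff (μ : ℝ) :
    (ofScalars ℝ (besselCliffordCoeff μ)).radius = ⊤ := by
  have hlarge : ∀ᶠ m : ℕ in atTop, -μ ≤ m := tendsto_natCast_atTop_atTop.eventually_ge_atTop (-μ)
  have hpos : ∀ᶠ m : ℕ in atTop, 0 < besselCliffordCoeff μ m :=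
    hlarge.mono fun m hm => besselCliffordCoeff_pos (by linarith)
  have hratio : ∀ᶠ m : ℕ in atTop,
      ‖besselCliffordCoeff μ m.succ‖ / ‖besselCliffordCoeff μ m‖ ≤ 1 / ((m : ℝ) + 1) := by
    filter_upwards [hlarge, hpos, (tendsto_add_atTop_nat 1).eventually hpos] with m hm hm_pos hsucc
    rw [Real.norm_of_nonneg hm_pos.le, Real.norm_of_nonneg hsucc.le,
      div_le_div_iff₀ hm_pos (by positivity)]
    calc besselCliffordCoeff μ (m + 1) * (m + 1)
        = 1 * besselCliffordCoeff (μ + 1) m := by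
          rw [← succ_mul_besselCliffordCoeff_succ]; ring
      _ ≤ (m + μ + 1) * besselCliffordCoeff (μ + 1) m := by
          gcongr
          · exact (besselCliffordCoeff_pos (by linarith)).le
          · linarith
      _ = 1 * besselCliffordCoeff μ m := by rw [add_mul_besselCliffordCoeff_add_one, one_mul]
  exact FormalMultilinearSeries.ofScalars_radius_eq_top_of_tendsto ℝ _
    (hpos.mono fun m hm => hm.ne')
    (squeeze_zero' (.of_forall fun m => by positivity) hratio
      tendsto_one_div_add_atTop_nhds_zero_nat)

lemma hasDerivAt_besselClifford (μ t : ℝ) :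
    HasDerivAt (besselClifford μ) (besselClifford (μ + 1) t) t := by
  have h := hasDerivAt_tsum_mul_pow (radius_besselCliffordCoeff μ) t
  simp only [succ_mul_besselCliffordCoeff_succ] at h
  exact h

lemma continuous_besselClifford (μ : ℝ) : Continuous (besselClifford μ) :=
  continuous_iff_continuousAt.2 fun t => (hasDerivAt_besselClifford μ t).continuousAt

lemma besselClifford_recurrence (μ t : ℝ) :
    t * besselClifford (μ + 2) t + (μ + 1) * besselClifford (μ + 1) t = besselClifford μ t := by
  have hradius := radius_besselCliffordCoeff (μ + 1)
  have hshift : t * besselClifford (μ + 2) t =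
      ∑' m : ℕ, (m * besselCliffordCoeff (μ + 1) m) * t ^ m := by
    rw [← mul_tsum_succ_mul_pow hradius, show μ + 2 = μ + 1 + 1 by ring]
    simp only [succ_mul_besselCliffordCoeff_succ, besselClifford]
  rw [hshift, besselClifford, ← tsum_mul_left, ← (summable_natCast_mul_mul_pow hradius t).tsum_add
    ((summable_mul_pow_of_radius_eq_top hradius t).mul_left _)]
  refine tsum_congr fun m => ?_
  rw [← add_mul_besselCliffordCoeff_add_one μ m]
  ring

lemma besselClifford_pos {μ t : ℝ} (hμ : -1 < μ) (ht : 0 ≤ t) : 0 < besselClifford μ t := by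
  have hcoeff (m : ℕ) : 0 < besselCliffordCoeff μ m :=
    besselCliffordCoeff_pos (by linarith [m.cast_nonneg (α := ℝ)])
  refine (summable_mul_pow_of_radius_eq_top (radius_besselCliffordCoeff μ) t).tsum_pos
    (fun m => mul_nonneg (hcoeff m).le (pow_nonneg ht m)) 0 ?_
  simpa using hcoeff 0

lemma besselI_eq_rpow_mul_besselClifford (μ : ℝ) {x : ℝ} (hx : 0 < x) :
    besselI μ x = (x / 2) ^ μ * besselClifford μ (x ^ 2 / 4) := by
  rw [besselI, besselClifford, ← tsum_mul_left]
  refine tsum_congr fun m => ?_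
  have hpow : (x / 2) ^ (2 * (m : ℝ) + μ) = (x / 2) ^ μ * (x ^ 2 / 4) ^ m := by
    rw [add_comm, Real.rpow_add (by positivity), show x ^ 2 / 4 = (x / 2) ^ 2 by ring, ← pow_mul]
    exact_mod_cast rfl
  rw [hpow, besselCliffordCoeff]
  ring

lemma rpow_neg_mul_besselI_mul (μ : ℝ) {s x : ℝ} (hs : 0 < s) (hx : 0 < x) :
    x ^ (-μ) * besselI μ (x * s) = (s / 2) ^ μ * besselClifford μ (s ^ 2 / 4 * x ^ 2) := by
  rw [besselI_eq_rpow_mul_besselClifford μ (mul_pos hx hs), mul_div_assoc,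
    Real.mul_rpow hx.le (by positivity), Real.rpow_neg hx.le]
  have hxμ : x ^ μ ≠ 0 := (Real.rpow_pos_of_pos hx μ).ne'
  field_simp

lemma mul_besselClifford_lt_of_besselI {μ s δ η : ℝ} (hs : 0 < s) (hη : 0 < η)
    (h : 0 < besselI μ s - δ * η ^ (-μ) * besselI μ (η * s)) :
    δ * besselClifford μ (s ^ 2 / 4 * η ^ 2) < besselClifford μ (s ^ 2 / 4) := by
  have h_one := rpow_neg_mul_besselI_mul μ hs one_pos
  rw [Real.one_rpow, one_mul, one_mul, one_pow, mul_one] at h_one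
  rw [mul_assoc, rpow_neg_mul_besselI_mul μ hs hη, h_one] at h
  refine lt_of_mul_lt_mul_left (a := (s / 2) ^ μ) ?_ (by positivity)
  linarith

lemma hasDerivAt_besselClifford_mul_sq (μ κ x : ℝ) :
    HasDerivAt (fun x => besselClifford μ (κ * x ^ 2))
      (2 * κ * x * besselClifford (μ + 1) (κ * x ^ 2)) x := by
  have hsq : HasDerivAt (fun x : ℝ => κ * x ^ 2) (κ * (2 * x)) x := by
    simpa using (hasDerivAt_pow 2 x).const_mul κ
  exact ((hasDerivAt_besselClifford μ _).comp x hsq).congr_deriv (by ring)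

lemma hasDerivAt_flux_besselClifford_mul_sq (μ κ : ℝ) {x : ℝ} (hx : 0 < x) :
    HasDerivAt (fun x => x ^ (2 * μ + 1) * (2 * κ * x * besselClifford (μ + 1) (κ * x ^ 2)))
      (4 * κ * x ^ (2 * μ + 1) * besselClifford μ (κ * x ^ 2)) x := by
  have hpow : HasDerivAt (fun x : ℝ => x ^ (2 * μ + 1)) ((2 * μ + 1) * x ^ (2 * μ)) x := by
    simpa using Real.hasDerivAt_rpow_const (x := x) (p := 2 * μ + 1) (Or.inl hx.ne')
  have hlin : HasDerivAt (fun x : ℝ => 2 * κ * x) (2 * κ) x := by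
    simpa using (hasDerivAt_id x).const_mul (2 * κ)
  have h := hpow.mul (hlin.mul (hasDerivAt_besselClifford_mul_sq (μ + 1) κ x))
  refine h.congr_deriv ?_
  rw [← besselClifford_recurrence μ, show μ + 1 + 1 = μ + 2 by ring, Real.rpow_add_one hx.ne']
  simp only [Pi.mul_apply]
  ring

lemma tendsto_flux_besselClifford_mul_sq {μ : ℝ} (hμ : -1 < μ) (κ : ℝ) :
    Tendsto (fun x => x ^ (2 * μ + 1) * (2 * κ * x * besselClifford (μ + 1) (κ * x ^ 2)))
      (𝓝[>] 0) (𝓝 0) := by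
  have hcont : Continuous fun x : ℝ => 2 * κ * besselClifford (μ + 1) (κ * x ^ 2) :=
    continuous_const.mul ((continuous_besselClifford _).comp (by fun_prop))
  have hlim := tendsto_rpow_mul_nhdsGT_zero (α := 2 * μ + 2) (by linarith)
    ((hcont.tendsto 0).mono_left nhdsWithin_le_nhds)
  refine hlim.congr' ?_
  filter_upwards [self_mem_nhdsWithin] with x hx
  rw [show 2 * μ + 2 = 2 * μ + 1 + 1 by ring, Real.rpow_add_one (ne_of_gt hx)]
  ring

end BesselClifford

section WeightedWronskian

variable {a b : ℝ} {p r f f' y y' L : ℝ → ℝ}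

lemma antitoneOn_weightedWronskian
    (hf : ∀ x ∈ Ioo a b, HasDerivAt f (f' x) x)
    (hy : ∀ x ∈ Ioo a b, HasDerivAt y (y' x) x)
    (hpf : ∀ x ∈ Ioo a b, HasDerivAt (fun x => p x * f' x) (r x * f x) x)
    (hpy : ∀ x ∈ Ioo a b, HasDerivAt (fun x => p x * y' x) (L x) x)
    (hL : ∀ x ∈ Ioo a b, L x ≤ r x * y x) (hf_nonneg : ∀ x ∈ Ioo a b, 0 ≤ f x) :
    AntitoneOn (fun x => p x * y' x * f x - y x * (p x * f' x)) (Ioo a b) := by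
  have hW : ∀ x ∈ Ioo a b, HasDerivAt (fun x => p x * y' x * f x - y x * (p x * f' x))
      ((L x - r x * y x) * f x) x := fun x hx =>
    (((hpy x hx).mul (hf x hx)).sub ((hy x hx).mul (hpf x hx))).congr_deriv (by ring)
  refine antitoneOn_of_hasDerivWithinAt_nonpos (convex_Ioo a b)
    (fun x hx => (hW x hx).continuousAt.continuousWithinAt)
    (fun x hx => (hW x (interior_subset hx)).hasDerivWithinAt) fun x hx => ?_
  have hx' := interior_subset hx
  exact mul_nonpos_of_nonpos_of_nonneg (sub_nonpos.2 (hL x hx')) (hf_nonneg x hx')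

lemma le_of_antitoneOn_of_tendsto_nhdsGT {W : ℝ → ℝ} {l x : ℝ} (hW : AntitoneOn W (Ioo a b))
    (hlim : Tendsto W (𝓝[>] a) (𝓝 l)) (hx : x ∈ Ioo a b) : W x ≤ l := by
  refine ge_of_tendsto hlim ?_
  filter_upwards [Ioo_mem_nhdsGT hx.1] with t ht
  exact hW ⟨ht.1, ht.2.trans hx.2⟩ hx ht.2.le

lemma antitoneOn_div_of_supersolution
    (hf : ∀ x ∈ Ioo a b, HasDerivAt f (f' x) x)
    (hy : ∀ x ∈ Ioo a b, HasDerivAt y (y' x) x)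
    (hpf : ∀ x ∈ Ioo a b, HasDerivAt (fun x => p x * f' x) (r x * f x) x)
    (hpy : ∀ x ∈ Ioo a b, HasDerivAt (fun x => p x * y' x) (L x) x)
    (hL : ∀ x ∈ Ioo a b, L x ≤ r x * y x) (hp_pos : ∀ x ∈ Ioo a b, 0 < p x)
    (hfc : ContinuousOn f (Icc a b)) (hyc : ContinuousOn y (Icc a b))
    (hf_pos : ∀ x ∈ Icc a b, 0 < f x)
    (hpf_lim : Tendsto (fun x => p x * f' x) (𝓝[>] a) (𝓝 0))
    (hpy_lim : Tendsto (fun x => p x * y' x) (𝓝[>] a) (𝓝 0)) :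
    AntitoneOn (fun x => y x / f x) (Icc a b) := by
  have hf_pos' : ∀ x ∈ Ioo a b, 0 < f x := fun x hx => hf_pos x (Ioo_subset_Icc_self hx)
  have hwronskian : ∀ x ∈ Ioo a b, p x * y' x * f x - y x * (p x * f' x) ≤ 0 := by
    intro x hx
    have hab : a < b := hx.1.trans hx.2
    have ha : a ∈ Icc a b := left_mem_Icc.2 hab.le
    have hf_lim : Tendsto f (𝓝[>] a) (𝓝 (f a)) :=
      (hfc a ha).mono_of_mem_nhdsWithin (Icc_mem_nhdsGT hab)
    have hy_lim : Tendsto y (𝓝[>] a) (𝓝 (y a)) :=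
      (hyc a ha).mono_of_mem_nhdsWithin (Icc_mem_nhdsGT hab)
    refine le_of_antitoneOn_of_tendsto_nhdsGT
      (W := fun x => p x * y' x * f x - y x * (p x * f' x))
      (antitoneOn_weightedWronskian hf hy hpf hpy hL fun x hx => (hf_pos' x hx).le) ?_ hx
    simpa using (hpy_lim.mul hf_lim).sub (hy_lim.mul hpf_lim)
  refine antitoneOn_of_hasDerivWithinAt_nonpos (convex_Icc a b)
    (f' := fun x => (y' x * f x - y x * f' x) / f x ^ 2)
    (hyc.div hfc fun x hx => (hf_pos x hx).ne') ?_ ?_ <;>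
    rw [interior_Icc]
  · exact fun x hx => ((hy x hx).div (hf x hx) (hf_pos' x hx).ne').hasDerivWithinAt
  · intro x hx
    refine div_nonpos_of_nonpos_of_nonneg ?_ (sq_nonneg _)
    refine nonpos_of_mul_nonpos_right ?_ (hp_pos x hx)
    linarith [hwronskian x hx]

lemma nonneg_of_antitoneOn_div {δ η : ℝ} (hanti : AntitoneOn (fun x => y x / f x) (Icc a b))
    (hf_pos : ∀ x ∈ Icc a b, 0 < f x) (hη : η ∈ Icc a b) (hδ : 0 ≤ δ)
    (hδf : δ * f η < f b) (hδy : δ * y η ≤ y b) : ∀ x ∈ Icc a b, 0 ≤ y x := by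
  have hb : b ∈ Icc a b := right_mem_Icc.2 (hη.1.trans hη.2)
  have hy_eq : ∀ x ∈ Icc a b, y x = f x * (y x / f x) := fun x hx =>
    (mul_div_cancel₀ _ (hf_pos x hx).ne').symm
  have hquot_b : 0 ≤ y b / f b := by
    refine nonneg_of_mul_nonneg_right (a := f b - δ * f η) ?_ (sub_pos.2 hδf)
    have h : δ * f η * (y b / f b) ≤ f b * (y b / f b) :=
      calc δ * f η * (y b / f b) ≤ δ * f η * (y η / f η) :=
            mul_le_mul_of_nonneg_left (hanti hη hb hη.2) (mul_nonneg hδ (hf_pos η hη).le)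
        _ = δ * y η := by rw [mul_assoc, ← hy_eq η hη]
        _ ≤ y b := hδy
        _ = f b * (y b / f b) := hy_eq b hb
    linarith
  intro x hx
  rw [hy_eq x hx]
  exact mul_nonneg (hf_pos x hx).le (hquot_b.trans (hanti hx hb hx.2))

end WeightedWronskian

lemma antitoneOn_div_besselClifford_mul_sq {μ κ b : ℝ} (hμ : -1 < μ) (hκ : 0 ≤ κ) {y : ℝ → ℝ}
    (hyc : ContinuousOn y (Icc 0 b))
    (hy1 : ∀ x ∈ Ioo 0 b, DifferentiableAt ℝ y x)
    (hy2 : ∀ x ∈ Ioo 0 b, DifferentiableAt ℝ (deriv y) x)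
    (hineq : ∀ x ∈ Ioo 0 b,
      (2 * μ + 1) * x ^ (2 * μ + 1 - 1) * deriv y x + x ^ (2 * μ + 1) * deriv (deriv y) x
        ≤ 4 * κ * x ^ (2 * μ + 1) * y x)
    (hflux : Tendsto (fun x => x ^ (2 * μ + 1) * deriv y x) (𝓝[>] 0) (𝓝 0)) :
    AntitoneOn (fun x => y x / besselClifford μ (κ * x ^ 2)) (Icc 0 b) :=
  have hf_deriv := hasDerivAt_besselClifford_mul_sq μ κ
  antitoneOn_div_of_supersolution (fun x _ => hf_deriv x) (fun x hx => (hy1 x hx).hasDerivAt)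
    (fun _ hx => hasDerivAt_flux_besselClifford_mul_sq μ κ hx.1)
    (fun x hx => (Real.hasDerivAt_rpow_const (Or.inl hx.1.ne')).mul (hy2 x hx).hasDerivAt)
    hineq (fun _ hx => Real.rpow_pos_of_pos hx.1 _)
    (fun x _ => (hf_deriv x).continuousAt.continuousWithinAt) hyc
    (fun _ _ => besselClifford_pos hμ (by positivity))
    (tendsto_flux_besselClifford_mul_sq hμ κ) hflux

theorem maximum_principle_neg_lambda_general {α lam δ η ν : ℝ} (hα : -1 < α)
    (hν : ν = (1 - α) / 2) (hlam : lam < 0) (hη0 : 0 < η) (hη1 : η ≤ 1) (hδ : 0 ≤ δ)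
    (hI : 0 < besselI (-ν) (Real.sqrt |lam|)
        - δ * η ^ ν * besselI (-ν) (η * Real.sqrt |lam|))
    {y : ℝ → ℝ} (hyc : ContinuousOn y (Icc 0 1))
    (hy1 : ∀ x ∈ Ioo (0 : ℝ) 1, DifferentiableAt ℝ y x)
    (hy2 : ∀ x ∈ Ioo (0 : ℝ) 1, DifferentiableAt ℝ (deriv y) x)
    (hineq : ∀ x ∈ Ioo (0 : ℝ) 1,
      0 ≤ -(α * x ^ (α - 1) * deriv y x + x ^ α * deriv (deriv y) x)
        - lam * x ^ α * y x)
    (hflux : Tendsto (fun x => x ^ α * deriv y x) (𝓝[>] 0) (𝓝 0)) (hbc1 : δ * y η ≤ y 1) :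
    ∀ x ∈ Icc (0 : ℝ) 1, 0 ≤ y x := by
  obtain ⟨μ, rfl⟩ : ∃ μ, ν = -μ := ⟨-ν, (neg_neg ν).symm⟩
  obtain rfl : α = 2 * μ + 1 := by linarith
  have hμ : -1 < μ := by linarith
  set s := Real.sqrt |lam|
  have hs : 0 < s := Real.sqrt_pos.2 (abs_pos.2 hlam.ne)
  have hs_sq : s ^ 2 = -lam := by rw [Real.sq_sqrt (abs_nonneg _), abs_of_neg hlam]
  have hanti := antitoneOn_div_besselClifford_mul_sq hμ (κ := s ^ 2 / 4) (by positivity) hyc hy1 hy2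
    (fun x hx => by rw [hs_sq]; linarith [hineq x hx]) hflux
  rw [neg_neg] at hI
  exact nonneg_of_antitoneOn_div hanti (fun _ _ => besselClifford_pos hμ (by positivity))
    ⟨hη0.le, hη1⟩ hδ
    (by simpa only [one_pow, mul_one] using mul_besselClifford_lt_of_besselI hs hη0 hI) hbc1

/-- **Maximum principle for negative `λ` (Proposition 4.2, (Max₂)).**
For `α ≥ 1`, `ν = (1−α)/2`, `λ < 0`, `0 < η < 1` and hypothesis `(H₀')`:
if `y ∈ C¹[0,1]` is twice differentiable on `(0,1)` and satisfies
`−(x^α y')' − λ x^α y ≥ 0` on `(0,1)`, `y'(0) = 0` and `y(1) ≥ δ·y(η)`,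
then `y ≥ 0` on `[0,1]`. -/
theorem maximum_principle_neg_lambda (α lam δ η ν : ℝ) (hα : 1 ≤ α)
    (hν : ν = (1 - α) / 2) (hlam : lam < 0)
    (hη0 : 0 < η) (hη1 : η < 1) (hδ : 0 < δ)
    (hH1 : besselK ν (Real.sqrt |lam|)
        - δ * η ^ ν * besselK ν (η * Real.sqrt |lam|) ≤ 0)
    (hH2 : 0 < besselI (-ν) (Real.sqrt |lam|)
        - δ * η ^ ν * besselI (-ν) (η * Real.sqrt |lam|))
    (y : ℝ → ℝ)
    (hyc : ContinuousOn y (Set.Icc 0 1))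
    (hy1 : ∀ x ∈ Set.Icc (0 : ℝ) 1, DifferentiableAt ℝ y x)
    (hy1c : ContinuousOn (deriv y) (Set.Icc 0 1))
    (hy2 : ∀ x ∈ Set.Ioo (0 : ℝ) 1, DifferentiableAt ℝ (deriv y) x)
    (hineq : ∀ x ∈ Set.Ioo (0 : ℝ) 1,
      0 ≤ -(α * x ^ (α - 1) * deriv y x + x ^ α * deriv (deriv y) x)
        - lam * x ^ α * y x)
    (hbc0 : deriv y 0 = 0) (hbc1 : δ * y η ≤ y 1) :
    ∀ x ∈ Set.Icc (0 : ℝ) 1, 0 ≤ y x := by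
  have hy'_lim : Tendsto (deriv y) (𝓝[>] 0) (𝓝 (deriv y 0)) :=
    (hy1c 0 (left_mem_Icc.2 zero_le_one)).mono_of_mem_nhdsWithin (Icc_mem_nhdsGT zero_lt_one)
  exact maximum_principle_neg_lambda_general (by linarith) hν hlam hη0 hη1.le hδ.le hH2 hyc
    (fun x hx => hy1 x (Ioo_subset_Icc_self hx)) hy2 hineq
    (tendsto_rpow_mul_nhdsGT_zero (by linarith) hy'_lim) hbc1
end

section
/- (Existence in the well-ordered case, positive λ.) Let n ≥ 1 be a natural number, let α ∈ (4n−3, 4n−1), set ν = (1−α)/2, let 0 < η < 1, and let λ and δ satisfy (H_0): 0 < λ < j_{ν,1}², 0 < δ < 1, δ·η^ν·J_ν(η·√λ) − J_ν(√λ) ≥ 0, and J_{−ν}(√λ) − δ·η^ν·J_{−ν}(η·√λ) > 0. Suppose: (i) u₀ and v₀ are twice continuously differentiable on [0,1] with v₀(x) ≤ u₀(x) for all x ∈ [0,1], u₀ is an upper solution and v₀ is a lower solution; (ii) f is continuous on D₁ := {(x,y) : x ∈ [0,1], v₀(x) ≤ y ≤ u₀(x)}; (iii) there exists M₂ ≥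 0 such that for all (x,y), (x,w) ∈ D₁ with y ≤ w one has f(x,w) − f(x,y) ≥ M₂·(w − y); and (iv) M₂ − λ ≥ 0. Then there exist solutions v and u of the boundary value problem with v₀ ≤ v ≤ u ≤ u₀ on [0,1], and every solution z of the boundary value problem satisfying v₀ ≤ z ≤ u₀ on [0,1] satisfies v ≤ z ≤ u on [0,1]; in particular, the boundary value problem has at least one solution in D₁. -/
/-- The Bessel function of the first kind of real order `μ`. -/
noncomputable def besselJ (μ x : ℝ) : ℝ :=
  ∑' m : ℕ, ((-1 : ℝ) ^ m / ((m.factorial : ℝ) * Real.Gamma ((m : ℝ) + μ + 1))) *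
    (x / 2) ^ (2 * (m : ℝ) + μ)

/-- `y` is a solution of the three-point singular BVP
`−(x^α y')' = x^α f(x, y)` on `(0,1)`, `y'(0) = 0`, `y(1) = δ·y(η)`:
`y` is continuous on `[0,1]`, continuously differentiable on `[0,1]`, twice
differentiable on `(0,1)`, satisfies the equation on `(0,1)` (with
`(x^α y')' = α x^{α−1} y' + x^α y''`) and both boundary conditions. -/
def IsBVPSolution (α δ η : ℝ) (f : ℝ → ℝ → ℝ) (y : ℝ → ℝ) : Prop :=
  ContinuousOn y (Set.Icc 0 1) ∧
  (∀ x ∈ Set.Icc (0 : ℝ) 1, DifferentiableAt ℝ y x) ∧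
  ContinuousOn (deriv y) (Set.Icc 0 1) ∧
  (∀ x ∈ Set.Ioo (0 : ℝ) 1, DifferentiableAt ℝ (deriv y) x) ∧
  (∀ x ∈ Set.Ioo (0 : ℝ) 1,
    -(α * x ^ (α - 1) * deriv y x + x ^ α * deriv (deriv y) x) = x ^ α * f x (y x)) ∧
  deriv y 0 = 0 ∧ y 1 = δ * y η

/-- `u` is an upper solution of the three-point singular BVP: `u` is twice
continuously differentiable on `[0,1]`, `−(x^α u')' ≥ x^α f(x, u)` on `(0,1)`,
`u'(0) = 0` and `u(1) ≥ δ·u(η)`. -/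
def IsUpperSolution (α δ η : ℝ) (f : ℝ → ℝ → ℝ) (u : ℝ → ℝ) : Prop :=
  (∀ x ∈ Set.Icc (0 : ℝ) 1, DifferentiableAt ℝ u x) ∧
  (∀ x ∈ Set.Icc (0 : ℝ) 1, DifferentiableAt ℝ (deriv u) x) ∧
  ContinuousOn (deriv (deriv u)) (Set.Icc 0 1) ∧
  (∀ x ∈ Set.Ioo (0 : ℝ) 1,
    x ^ α * f x (u x) ≤ -(α * x ^ (α - 1) * deriv u x + x ^ α * deriv (deriv u) x)) ∧
  deriv u 0 = 0 ∧ δ * u η ≤ u 1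

/-- `v` is a lower solution of the three-point singular BVP: `v` is twice
continuously differentiable on `[0,1]`, `−(x^α v')' ≤ x^α f(x, v)` on `(0,1)`,
`v'(0) = 0` and `v(1) ≤ δ·v(η)`. -/
def IsLowerSolution (α δ η : ℝ) (f : ℝ → ℝ → ℝ) (v : ℝ → ℝ) : Prop :=
  (∀ x ∈ Set.Icc (0 : ℝ) 1, DifferentiableAt ℝ v x) ∧
  (∀ x ∈ Set.Icc (0 : ℝ) 1, DifferentiableAt ℝ (deriv v) x) ∧
  ContinuousOn (deriv (deriv v)) (Set.Icc 0 1) ∧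
  (∀ x ∈ Set.Ioo (0 : ℝ) 1,
    -(α * x ^ (α - 1) * deriv v x + x ^ α * deriv (deriv v) x) ≤ x ^ α * f x (v x)) ∧
  deriv v 0 = 0 ∧ v 1 ≤ δ * v η

/-!
Since `f` is nondecreasing in `y` on the strip between `v₀` and `u₀`, the problem is a fixed-point
problem for a monotone map. Let `A w` be the solution `y` of `-(x^α y')' = x^α f(x, w(x))` with
`y'(0) = 0` and `y(1) = δ y(η)`, which is given by two explicit integrations. A comparison principle
for `y ↦ -(x^α y')'` under these boundary conditions shows that `A` is monotone, that `v₀ ≤ A v₀`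
and `A u₀ ≤ u₀`, and that the solutions lying between `v₀` and `u₀` are exactly the fixed points of
`A` there. As `f` is bounded on the strip, `A` takes values in the `K`-Lipschitz functions for a
fixed `K`; these are stable under arbitrary pointwise infima and suprema, so the Knaster–Tarski
argument provides a least and a greatest fixed point.
-/

open Set Function unitInterval
open scoped NNReal

section FixedPoints

theorem exists_isLeast_fixedPoints {β : Type*} [ConditionallyCompleteLattice β] {s : Set β}
    {A : β → β} (hbdd : BddBelow s) (hsInf : ∀ t ⊆ s, t.Nonempty → sInf t ∈ s)
    (hmaps : MapsTo A s s) (hmono : MonotoneOn A s) (hpre : ∃ p ∈ s, A p ≤ p) :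
    ∃ a, IsLeast (s ∩ fixedPoints A) a := by
  set t := {w ∈ s | A w ≤ w}
  have hts : t ⊆ s := sep_subset _ _
  have ht : t.Nonempty := hpre
  have ha : sInf t ∈ s := hsInf t hts ht
  have sInf_le : ∀ w ∈ t, sInf t ≤ w := fun w hw => csInf_le (hbdd.mono hts) hw
  have map_sInf_le : A (sInf t) ≤ sInf t :=
    le_csInf ht fun w hw => (hmono ha hw.1 (sInf_le w hw)).trans hw.2
  have sInf_le_map : sInf t ≤ A (sInf t) :=
    sInf_le _ ⟨hmaps ha, hmono (hmaps ha) ha map_sInf_le⟩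
  exact ⟨sInf t, ⟨ha, map_sInf_le.antisymm sInf_le_map⟩, fun w hw => sInf_le w ⟨hw.1, hw.2.le⟩⟩

theorem exists_isGreatest_fixedPoints {β : Type*} [ConditionallyCompleteLattice β] {s : Set β}
    {A : β → β} (hbdd : BddAbove s) (hsSup : ∀ t ⊆ s, t.Nonempty → sSup t ∈ s)
    (hmaps : MapsTo A s s) (hmono : MonotoneOn A s) (hpost : ∃ p ∈ s, p ≤ A p) :
    ∃ b, IsGreatest (s ∩ fixedPoints A) b :=
  exists_isLeast_fixedPoints (β := βᵒᵈ) hbdd hsSup hmaps hmono.dual hpost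

variable {X : Type*} [PseudoMetricSpace X] {K : ℝ≥0} {v u : X → ℝ}

theorem lipschitzWith_sSup {t : Set (X → ℝ)} (ht : t.Nonempty) (hbdd : BddAbove t)
    (hlip : ∀ w ∈ t, LipschitzWith K w) : LipschitzWith K (sSup t) := by
  have le_sSup {w} (hw : w ∈ t) : w ≤ sSup t := le_csSup hbdd hw
  refine LipschitzWith.of_le_add_mul K fun x y => ?_
  have : Nonempty t := ht.to_subtype
  rw [sSup_apply]
  refine ciSup_le fun w => ((hlip w w.2).le_add_mul x y).trans ?_
  gcongr
  exact le_sSup w.2 y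

theorem lipschitzWith_sInf {t : Set (X → ℝ)} (ht : t.Nonempty) (hbdd : BddBelow t)
    (hlip : ∀ w ∈ t, LipschitzWith K w) : LipschitzWith K (sInf t) := by
  have sInf_le {w} (hw : w ∈ t) : sInf t ≤ w := csInf_le hbdd hw
  refine LipschitzWith.of_le_add_mul K fun x y => ?_
  have : Nonempty t := ht.to_subtype
  rw [← sub_le_iff_le_add, sInf_apply (a := y)]
  exact le_ciInf fun w =>
    sub_le_iff_le_add.2 ((sInf_le w.2 x).trans ((hlip w w.2).le_add_mul x y))

/-- The continuous functions lying between `v` and `u`. -/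
def continuousBand {X : Type*} [TopologicalSpace X] (v u : X → ℝ) : Set (X → ℝ) :=
  {w | Continuous w} ∩ Icc v u

theorem exists_isLeast_isGreatest_fixedPoints_continuousBand {A : (X → ℝ) → X → ℝ}
    (hv : Continuous v) (hu : Continuous u) (hvu : v ≤ u)
    (hmaps : MapsTo A (continuousBand v u) (Icc v u))
    (hlip : ∀ w ∈ continuousBand v u, LipschitzWith K (A w))
    (hmono : MonotoneOn A (continuousBand v u)) :
    (∃ a, IsLeast (continuousBand v u ∩ fixedPoints A) a) ∧
      ∃ b, IsGreatest (continuousBand v u ∩ fixedPoints A) b := by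
  set s := {w | LipschitzWith K w} ∩ Icc v u
  have hs : s ⊆ continuousBand v u := fun w hw => ⟨hw.1.continuous, hw.2⟩
  have hAs {w} (hw : w ∈ continuousBand v u) : A w ∈ s := ⟨hlip w hw, hmaps hw⟩
  have fixedPoints_eq : continuousBand v u ∩ fixedPoints A = s ∩ fixedPoints A :=
    Subset.antisymm (fun w hw => ⟨hw.2.eq ▸ hAs hw.1, hw.2⟩) (inter_subset_inter_left _ hs)
  have hvA : v ∈ continuousBand v u := ⟨hv, left_mem_Icc.2 hvu⟩
  have huA : u ∈ continuousBand v u := ⟨hu, right_mem_Icc.2 hvu⟩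
  have hbelow : BddBelow s := bddBelow_Icc.mono inter_subset_right
  have habove : BddAbove s := bddAbove_Icc.mono inter_subset_right
  rw [fixedPoints_eq]
  constructor
  · refine exists_isLeast_fixedPoints hbelow (fun t hts ht => ⟨?_, ?_⟩) (fun w hw => hAs (hs hw))
      (hmono.mono hs) ⟨A u, hAs huA, hmono (hs (hAs huA)) huA (hmaps huA).2⟩
    · exact lipschitzWith_sInf ht (hbelow.mono hts) fun w hw => (hts hw).1
    · obtain ⟨w, hw⟩ := ht
      exact ⟨le_csInf ⟨w, hw⟩ fun w' hw' => (hts hw').2.1,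
        (csInf_le (hbelow.mono hts) hw).trans (hts hw).2.2⟩
  · refine exists_isGreatest_fixedPoints habove (fun t hts ht => ⟨?_, ?_⟩)
      (fun w hw => hAs (hs hw)) (hmono.mono hs)
      ⟨A v, hAs hvA, hmono hvA (hs (hAs hvA)) (hmaps hvA).1⟩
    · exact lipschitzWith_sSup ht (habove.mono hts) fun w hw => (hts hw).1
    · obtain ⟨w, hw⟩ := ht
      exact ⟨(hts hw).2.1.trans (le_csSup (habove.mono hts) hw),
        csSup_le ⟨w, hw⟩ fun w' hw' => (hts hw').2.2⟩

end FixedPoints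

section Comparison

/-- The differential operator `(x^α y')' = α x^(α-1) y' + x^α y''` of the boundary value problem. -/
noncomputable def weightedLaplacian (α : ℝ) (y : ℝ → ℝ) (x : ℝ) : ℝ :=
  α * x ^ (α - 1) * deriv y x + x ^ α * deriv (deriv y) x

/-- The regularity and the condition `y'(0) = 0` that solutions, lower solutions and upper solutions
of the boundary value problem have in common. -/
structure IsBVPRegular (y : ℝ → ℝ) : Prop where
  differentiableAt : ∀ x ∈ Icc (0 : ℝ) 1, DifferentiableAt ℝ y x
  continuousOn_deriv : ContinuousOn (deriv y) (Icc 0 1)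
  differentiableAt_deriv : ∀ x ∈ Ioo (0 : ℝ) 1, DifferentiableAt ℝ (deriv y) x
  deriv_zero : deriv y 0 = 0

variable {α δ η : ℝ} {y₁ y₂ : ℝ → ℝ}

theorem IsBVPRegular.continuousOn {y : ℝ → ℝ} (hy : IsBVPRegular y) : ContinuousOn y (Icc 0 1) :=
  fun x hx => (hy.differentiableAt x hx).continuousAt.continuousWithinAt

theorem hasDerivAt_rpow_mul_deriv {y : ℝ → ℝ} {x : ℝ} (hx : x ≠ 0)
    (hy : DifferentiableAt ℝ (deriv y) x) :
    HasDerivAt (fun s => s ^ α * deriv y s) (weightedLaplacian α y x) x :=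
  (Real.hasDerivAt_rpow_const (Or.inl hx)).mul hy.hasDerivAt

theorem deriv_le_deriv_of_weightedLaplacian_le (hα : 0 ≤ α) (h₁ : IsBVPRegular y₁)
    (h₂ : IsBVPRegular y₂)
    (hL : ∀ x ∈ Ioo (0 : ℝ) 1, weightedLaplacian α y₂ x ≤ weightedLaplacian α y₁ x) {x : ℝ}
    (hx : x ∈ Ioo (0 : ℝ) 1) : deriv y₂ x ≤ deriv y₁ x := by
  have flux_hasDerivAt : ∀ s ∈ Ioo (0 : ℝ) 1, HasDerivAt
      (fun s => s ^ α * deriv y₂ s - s ^ α * deriv y₁ s)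
      (weightedLaplacian α y₂ s - weightedLaplacian α y₁ s) s := fun s hs =>
    (hasDerivAt_rpow_mul_deriv hs.1.ne' (h₂.differentiableAt_deriv s hs)).sub
      (hasDerivAt_rpow_mul_deriv hs.1.ne' (h₁.differentiableAt_deriv s hs))
  have flux_antitone :
      AntitoneOn (fun s => s ^ α * deriv y₂ s - s ^ α * deriv y₁ s) (Icc 0 1) := by
    have hpow := (Real.continuous_rpow_const hα).continuousOn (s := Icc (0 : ℝ) 1)
    apply antitoneOn_of_hasDerivWithinAt_nonpos (convex_Icc 0 1)
      ((hpow.mul h₂.continuousOn_deriv).sub (hpow.mul h₁.continuousOn_deriv))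
      (f' := fun s => weightedLaplacian α y₂ s - weightedLaplacian α y₁ s)
    · exact fun s hs => (flux_hasDerivAt s (interior_Icc (a := (0 : ℝ)) ▸ hs)).hasDerivWithinAt
    · exact fun s hs => sub_nonpos.2 (hL s (interior_Icc (a := (0 : ℝ)) ▸ hs))
  have flux_le : x ^ α * deriv y₂ x - x ^ α * deriv y₁ x ≤ 0 := by
    simpa [h₁.deriv_zero, h₂.deriv_zero] using
      flux_antitone (left_mem_Icc.2 zero_le_one) (Ioo_subset_Icc_self hx) hx.1.le
  exact le_of_mul_le_mul_left (sub_nonpos.1 flux_le) (Real.rpow_pos_of_pos hx.1 α)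

theorem antitoneOn_sub_of_weightedLaplacian_le (hα : 0 ≤ α) (h₁ : IsBVPRegular y₁)
    (h₂ : IsBVPRegular y₂)
    (hL : ∀ x ∈ Ioo (0 : ℝ) 1, weightedLaplacian α y₂ x ≤ weightedLaplacian α y₁ x) :
    AntitoneOn (fun x => y₂ x - y₁ x) (Icc 0 1) := by
  apply antitoneOn_of_hasDerivWithinAt_nonpos (convex_Icc 0 1)
    (h₂.continuousOn.sub h₁.continuousOn) (f' := fun x => deriv y₂ x - deriv y₁ x)
  · exact fun x hx => ((h₂.differentiableAt x (interior_subset hx)).hasDerivAt.sub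
      (h₁.differentiableAt x (interior_subset hx)).hasDerivAt).hasDerivWithinAt
  · rw [interior_Icc]
    exact fun x hx => sub_nonpos.2 (deriv_le_deriv_of_weightedLaplacian_le hα h₁ h₂ hL hx)

theorem le_of_weightedLaplacian_le (hα : 0 ≤ α) (hδ0 : 0 ≤ δ) (hδ1 : δ < 1)
    (hη : η ∈ Icc (0 : ℝ) 1) (h₁ : IsBVPRegular y₁) (h₂ : IsBVPRegular y₂)
    (hL : ∀ x ∈ Ioo (0 : ℝ) 1, weightedLaplacian α y₂ x ≤ weightedLaplacian α y₁ x)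
    (hb : y₁ 1 - δ * y₁ η ≤ y₂ 1 - δ * y₂ η) {x : ℝ} (hx : x ∈ Icc (0 : ℝ) 1) :
    y₁ x ≤ y₂ x := by
  have hanti := antitoneOn_sub_of_weightedLaplacian_le hα h₁ h₂ hL
  have le_sub {t : ℝ} (ht : t ∈ Icc (0 : ℝ) 1) : y₂ 1 - y₁ 1 ≤ y₂ t - y₁ t :=
    hanti ht (right_mem_Icc.2 zero_le_one) ht.2
  have sub_one_nonneg : 0 ≤ y₂ 1 - y₁ 1 := by
    have := mul_le_mul_of_nonneg_left (le_sub hη) hδ0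
    exact nonneg_of_mul_nonneg_right (a := 1 - δ) (by linarith) (by linarith)
  linarith [le_sub hx]

end Comparison

section LinearProblem

variable {α δ η : ℝ} {h h₁ h₂ : ℝ → ℝ} {x : ℝ}

/-- `s^(-α) ∫₀ˢ t^α h(t) dt`, the slope `-y'(s)` of a solution of `-(x^α y')' = x^α h`, `y'(0) = 0`.
The substitution `t = s r` makes it visibly continuous at `s = 0`. -/
noncomputable def radialSlope (α : ℝ) (h : ℝ → ℝ) (s : ℝ) : ℝ :=
  s * ∫ r in (0 : ℝ)..1, r ^ α * h (s * r)

/-- The solution of `-(x^α y')' = x^α h`, `y'(0) = 0`, `y(1) = δ y(η)`. -/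
noncomputable def threePointSolution (α δ η : ℝ) (h : ℝ → ℝ) (x : ℝ) : ℝ :=
  ((∫ s in (0 : ℝ)..1, radialSlope α h s) - δ * ∫ s in (0 : ℝ)..η, radialSlope α h s) / (1 - δ) -
    ∫ s in (0 : ℝ)..x, radialSlope α h s

theorem continuous_radialSlope (hα : 0 ≤ α) (hh : Continuous h) :
    Continuous (radialSlope α h) := by
  refine continuous_id.mul
    (intervalIntegral.continuous_parametric_intervalIntegral_of_continuous' ?_ 0 1)
  have := Real.continuous_rpow_const hα
  fun_prop

theorem radialSlope_eq_rpow_neg_mul_integral {s : ℝ} (hs : 0 < s) :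
    radialSlope α h s = s ^ (-α) * ∫ t in (0 : ℝ)..s, t ^ α * h t := by
  have hsubst : ∫ t in (0 : ℝ)..s, t ^ α * h t =
      s * ∫ r in (0 : ℝ)..1, s ^ α * (r ^ α * h (s * r)) := by
    have := intervalIntegral.mul_integral_comp_mul_left (a := 0) (b := 1)
      (f := fun t => t ^ α * h t) (c := s)
    rw [mul_zero, mul_one] at this
    rw [← this]
    congr 1
    refine intervalIntegral.integral_congr fun r hr => ?_
    rw [uIcc_of_le zero_le_one] at hr
    simp only [Real.mul_rpow hs.le hr.1, mul_assoc]
  rw [hsubst, intervalIntegral.integral_const_mul, mul_left_comm s, ← mul_assoc,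
    ← Real.rpow_add hs, neg_add_cancel, Real.rpow_zero, one_mul, radialSlope]

theorem hasDerivAt_radialSlope (hα : 0 ≤ α) (hh : Continuous h) (hx : 0 < x) :
    HasDerivAt (radialSlope α h) (h x - α / x * radialSlope α h x) x := by
  have hcont : Continuous fun t : ℝ => t ^ α * h t := (Real.continuous_rpow_const hα).mul hh
  have hprod := (Real.hasDerivAt_rpow_const (p := -α) (Or.inl hx.ne')).mul
    (hcont.integral_hasStrictDerivAt 0 x).hasDerivAt
  have hderiv : HasDerivAt (radialSlope α h) _ x := hprod.congr_of_eventuallyEq <| by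
    filter_upwards [lt_mem_nhds hx] with s hs using radialSlope_eq_rpow_neg_mul_integral hs
  refine hderiv.congr_deriv ?_
  have hcancel : x ^ (-α) * x ^ α = 1 := by rw [← Real.rpow_add hx, neg_add_cancel, Real.rpow_zero]
  rw [radialSlope_eq_rpow_neg_mul_integral hx, Real.rpow_sub_one hx.ne']
  linear_combination h x * hcancel

theorem hasDerivAt_threePointSolution (hα : 0 ≤ α) (hh : Continuous h) (x : ℝ) :
    HasDerivAt (threePointSolution α δ η h) (-radialSlope α h x) x :=
  ((continuous_radialSlope hα hh).integral_hasStrictDerivAt 0 x).hasDerivAt.const_sub _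

theorem deriv_threePointSolution (hα : 0 ≤ α) (hh : Continuous h) :
    deriv (threePointSolution α δ η h) = -radialSlope α h :=
  funext fun x => (hasDerivAt_threePointSolution hα hh x).deriv

theorem isBVPRegular_threePointSolution (hα : 0 ≤ α) (hh : Continuous h) :
    IsBVPRegular (threePointSolution α δ η h) where
  differentiableAt x _ := (hasDerivAt_threePointSolution hα hh x).differentiableAt
  continuousOn_deriv := by
    rw [deriv_threePointSolution hα hh]
    exact (continuous_radialSlope hα hh).neg.continuousOn
  differentiableAt_deriv x hx := by
    rw [deriv_threePointSolution hα hh]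
    exact (hasDerivAt_radialSlope hα hh hx.1).differentiableAt.neg
  deriv_zero := by
    rw [deriv_threePointSolution hα hh, Pi.neg_apply, radialSlope, zero_mul, neg_zero]

theorem weightedLaplacian_threePointSolution (hα : 0 ≤ α) (hh : Continuous h) (hx : 0 < x) :
    weightedLaplacian α (threePointSolution α δ η h) x = -(x ^ α * h x) := by
  rw [weightedLaplacian, deriv_threePointSolution hα hh,
    (hasDerivAt_radialSlope hα hh hx).neg.deriv, Pi.neg_apply, Real.rpow_sub_one hx.ne']
  ring

theorem threePointSolution_one (hδ : δ ≠ 1) :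
    threePointSolution α δ η h 1 = δ * threePointSolution α δ η h η := by
  have : 1 - δ ≠ 0 := sub_ne_zero.2 hδ.symm
  unfold threePointSolution
  field_simp
  ring

theorem threePointSolution_le (hα : 0 ≤ α) (hδ0 : 0 ≤ δ) (hδ1 : δ < 1) (hη : η ∈ Icc (0 : ℝ) 1)
    (hh : Continuous h) {z : ℝ → ℝ} (hz : IsBVPRegular z)
    (hL : ∀ x ∈ Ioo (0 : ℝ) 1, x ^ α * h x ≤ -weightedLaplacian α z x) (hb : δ * z η ≤ z 1)
    (hx : x ∈ Icc (0 : ℝ) 1) : threePointSolution α δ η h x ≤ z x := by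
  refine le_of_weightedLaplacian_le hα hδ0 hδ1 hη (isBVPRegular_threePointSolution hα hh) hz
    (fun t ht => ?_) ?_ hx
  · rw [weightedLaplacian_threePointSolution hα hh ht.1]
    exact le_neg_of_le_neg (hL t ht)
  · rw [threePointSolution_one hδ1.ne, sub_self]
    exact sub_nonneg.2 hb

theorem le_threePointSolution (hα : 0 ≤ α) (hδ0 : 0 ≤ δ) (hδ1 : δ < 1) (hη : η ∈ Icc (0 : ℝ) 1)
    (hh : Continuous h) {z : ℝ → ℝ} (hz : IsBVPRegular z)
    (hL : ∀ x ∈ Ioo (0 : ℝ) 1, -weightedLaplacian α z x ≤ x ^ α * h x) (hb : z 1 ≤ δ * z η)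
    (hx : x ∈ Icc (0 : ℝ) 1) : z x ≤ threePointSolution α δ η h x := by
  refine le_of_weightedLaplacian_le hα hδ0 hδ1 hη hz (isBVPRegular_threePointSolution hα hh)
    (fun t ht => ?_) ?_ hx
  · rw [weightedLaplacian_threePointSolution hα hh ht.1]
    exact neg_le_of_neg_le (hL t ht)
  · rw [threePointSolution_one hδ1.ne, sub_self]
    exact sub_nonpos.2 hb

theorem threePointSolution_mono (hα : 0 ≤ α) (hδ0 : 0 ≤ δ) (hδ1 : δ < 1)
    (hη : η ∈ Icc (0 : ℝ) 1) (hh₁ : Continuous h₁) (hh₂ : Continuous h₂)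
    (hle : ∀ x ∈ Ioo (0 : ℝ) 1, h₁ x ≤ h₂ x) (hx : x ∈ Icc (0 : ℝ) 1) :
    threePointSolution α δ η h₁ x ≤ threePointSolution α δ η h₂ x := by
  refine threePointSolution_le hα hδ0 hδ1 hη hh₁ (isBVPRegular_threePointSolution hα hh₂)
    (fun t ht => ?_) (threePointSolution_one hδ1.ne).ge hx
  rw [weightedLaplacian_threePointSolution hα hh₂ ht.1, neg_neg]
  exact mul_le_mul_of_nonneg_left (hle t ht) (Real.rpow_nonneg ht.1.le α)

theorem abs_radialSlope_le (hα : 0 ≤ α) {K : ℝ≥0} (hK : ∀ t, |h t| ≤ K) {s : ℝ}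
    (hs : s ∈ Icc (0 : ℝ) 1) : |radialSlope α h s| ≤ K := by
  have integrand_le : ∀ r ∈ uIoc (0 : ℝ) 1, ‖r ^ α * h (s * r)‖ ≤ K := by
    intro r hr
    rw [uIoc_of_le zero_le_one] at hr
    rw [norm_mul, Real.norm_eq_abs, Real.norm_eq_abs, abs_of_nonneg (Real.rpow_nonneg hr.1.le α)]
    exact (mul_le_of_le_one_left (abs_nonneg _) (Real.rpow_le_one hr.1.le hr.2 hα)).trans (hK _)
  have integral_le := intervalIntegral.norm_integral_le_of_norm_le_const integrand_le
  rw [sub_zero, abs_one, mul_one, Real.norm_eq_abs] at integral_le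
  rw [radialSlope, abs_mul, abs_of_nonneg hs.1]
  exact (mul_le_of_le_one_left (abs_nonneg _) hs.2).trans integral_le

theorem lipschitzOnWith_threePointSolution (hα : 0 ≤ α) (hh : Continuous h) {K : ℝ≥0}
    (hK : ∀ t, |h t| ≤ K) : LipschitzOnWith K (threePointSolution α δ η h) (Icc 0 1) :=
  (convex_Icc 0 1).lipschitzOnWith_of_nnnorm_hasDerivWithin_le
    (fun x _ => (hasDerivAt_threePointSolution hα hh x).hasDerivWithinAt) fun x hx => by
      rw [nnnorm_neg]
      exact abs_radialSlope_le hα hK hx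

end LinearProblem

section NonlinearProblem

variable {α δ η : ℝ} {f : ℝ → ℝ → ℝ} {v₀ u₀ z : ℝ → ℝ} {w : I → ℝ}

theorem IsUpperSolution.isBVPRegular (hu₀ : IsUpperSolution α δ η f u₀) : IsBVPRegular u₀ := by
  obtain ⟨hdiff, hdiff', -, -, hzero, -⟩ := hu₀
  exact ⟨hdiff, fun x hx => (hdiff' x hx).continuousAt.continuousWithinAt,
    fun x hx => hdiff' x (Ioo_subset_Icc_self hx), hzero⟩

theorem IsLowerSolution.isBVPRegular (hv₀ : IsLowerSolution α δ η f v₀) : IsBVPRegular v₀ := by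
  obtain ⟨hdiff, hdiff', -, -, hzero, -⟩ := hv₀
  exact ⟨hdiff, fun x hx => (hdiff' x hx).continuousAt.continuousWithinAt,
    fun x hx => hdiff' x (Ioo_subset_Icc_self hx), hzero⟩

theorem IsBVPSolution.isBVPRegular (hz : IsBVPSolution α δ η f z) : IsBVPRegular z := by
  obtain ⟨-, hdiff, hcont', hdiff', -, hzero, -⟩ := hz
  exact ⟨hdiff, hcont', hdiff', hzero⟩

/-- The function `x ↦ f(x, w(x))` on `[0,1]`, extended to `ℝ` by its values at the endpoints. The
extension is needed because the derivatives at `0` and `1` are two-sided. -/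
noncomputable def superposition (f : ℝ → ℝ → ℝ) (w : I → ℝ) : ℝ → ℝ :=
  IccExtend zero_le_one fun x : I => f x (w x)

/-- The map sending `w` to the solution `y` on `[0,1]` of `-(x^α y')' = x^α f(x, w(x))`,
`y'(0) = 0`, `y(1) = δ y(η)`. -/
noncomputable def solutionMap (α δ η : ℝ) (f : ℝ → ℝ → ℝ) (w : I → ℝ) : I → ℝ :=
  domRestrict I (threePointSolution α δ η (superposition f w))

/-- The region `D₁` of the plane between the graphs of `v₀` and `u₀` over `[0,1]`. -/
def strip (v₀ u₀ : ℝ → ℝ) : Set (ℝ × ℝ) :=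
  {p : ℝ × ℝ | p.1 ∈ Icc (0 : ℝ) 1 ∧ v₀ p.1 ≤ p.2 ∧ p.2 ≤ u₀ p.1}

theorem superposition_domRestrict {x : ℝ} (hx : x ∈ Icc (0 : ℝ) 1) :
    superposition f (domRestrict I z) x = f x (z x) :=
  IccExtend_of_mem zero_le_one _ hx

theorem continuous_comp_of_mem_continuousBand
    (hf : ContinuousOn (fun p : ℝ × ℝ => f p.1 p.2) (strip v₀ u₀))
    (hw : w ∈ continuousBand (domRestrict I v₀) (domRestrict I u₀)) :
    Continuous fun x : I => f x (w x) :=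
  hf.comp_continuous (continuous_subtype_val.prodMk hw.1) fun x => ⟨x.2, hw.2.1 x, hw.2.2 x⟩

theorem continuous_superposition
    (hf : ContinuousOn (fun p : ℝ × ℝ => f p.1 p.2) (strip v₀ u₀))
    (hw : w ∈ continuousBand (domRestrict I v₀) (domRestrict I u₀)) :
    Continuous (superposition f w) :=
  (continuous_comp_of_mem_continuousBand hf hw).Icc_extend'

theorem solutionMap_domRestrict_le (hα : 0 ≤ α) (hδ0 : 0 ≤ δ) (hδ1 : δ < 1) (hη : η ∈ Icc (0 : ℝ) 1)
    (hu₀ : IsUpperSolution α δ η f u₀) (hcont : Continuous (superposition f (domRestrict I u₀))) :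
    solutionMap α δ η f (domRestrict I u₀) ≤ domRestrict I u₀ := by
  obtain ⟨-, -, -, hineq, -, hb⟩ := id hu₀
  refine fun x => threePointSolution_le hα hδ0 hδ1 hη hcont hu₀.isBVPRegular (fun t ht => ?_) hb x.2
  rw [superposition_domRestrict (Ioo_subset_Icc_self ht)]
  exact hineq t ht

theorem le_solutionMap_domRestrict (hα : 0 ≤ α) (hδ0 : 0 ≤ δ) (hδ1 : δ < 1) (hη : η ∈ Icc (0 : ℝ) 1)
    (hv₀ : IsLowerSolution α δ η f v₀) (hcont : Continuous (superposition f (domRestrict I v₀))) :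
    domRestrict I v₀ ≤ solutionMap α δ η f (domRestrict I v₀) := by
  obtain ⟨-, -, -, hineq, -, hb⟩ := id hv₀
  refine fun x => le_threePointSolution hα hδ0 hδ1 hη hcont hv₀.isBVPRegular (fun t ht => ?_) hb x.2
  rw [superposition_domRestrict (Ioo_subset_Icc_self ht)]
  exact hineq t ht

theorem IsBVPSolution.isFixedPt_solutionMap (hα : 0 ≤ α) (hδ0 : 0 ≤ δ) (hδ1 : δ < 1)
    (hη : η ∈ Icc (0 : ℝ) 1) (hz : IsBVPSolution α δ η f z)
    (hcont : Continuous (superposition f (domRestrict I z))) :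
    IsFixedPt (solutionMap α δ η f) (domRestrict I z) := by
  obtain ⟨-, -, -, -, heq, -, hb⟩ := id hz
  have hL : ∀ t ∈ Ioo (0 : ℝ) 1,
      -weightedLaplacian α z t = t ^ α * superposition f (domRestrict I z) t := fun t ht => by
    rw [superposition_domRestrict (Ioo_subset_Icc_self ht)]
    exact heq t ht
  exact funext fun x => le_antisymm
    (threePointSolution_le hα hδ0 hδ1 hη hcont hz.isBVPRegular (fun t ht => (hL t ht).ge) hb.ge x.2)
    (le_threePointSolution hα hδ0 hδ1 hη hcont hz.isBVPRegular (fun t ht => (hL t ht).le) hb.le x.2)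

theorem isBVPSolution_of_isFixedPt_solutionMap (hα : 0 ≤ α) (hδ : δ ≠ 1)
    (hcont : Continuous (superposition f w)) (hw : IsFixedPt (solutionMap α δ η f) w) :
    IsBVPSolution α δ η f (threePointSolution α δ η (superposition f w)) := by
  have hreg := isBVPRegular_threePointSolution (δ := δ) (η := η) hα hcont
  refine ⟨hreg.continuousOn, hreg.differentiableAt, hreg.continuousOn_deriv,
    hreg.differentiableAt_deriv, fun x hx => ?_, hreg.deriv_zero, threePointSolution_one hδ⟩
  have hx' : x ∈ Icc (0 : ℝ) 1 := Ioo_subset_Icc_self hx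
  have hfix : threePointSolution α δ η (superposition f w) x = w ⟨x, hx'⟩ := congrFun hw ⟨x, hx'⟩
  have hL := weightedLaplacian_threePointSolution (δ := δ) (η := η) hα hcont hx.1
  rw [weightedLaplacian] at hL
  rw [hL, neg_neg, hfix, superposition, IccExtend_of_mem zero_le_one _ hx']

theorem monotoneOn_solutionMap (hα : 0 ≤ α) (hδ0 : 0 ≤ δ) (hδ1 : δ < 1) (hη : η ∈ Icc (0 : ℝ) 1)
    (hf : ContinuousOn (fun p : ℝ × ℝ => f p.1 p.2) (strip v₀ u₀))
    (hmono : ∀ x ∈ Icc (0 : ℝ) 1, MonotoneOn (f x) (Icc (v₀ x) (u₀ x))) :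
    MonotoneOn (solutionMap α δ η f) (continuousBand (domRestrict I v₀) (domRestrict I u₀)) := by
  intro w₁ hw₁ w₂ hw₂ hle x
  refine threePointSolution_mono hα hδ0 hδ1 hη (continuous_superposition hf hw₁)
    (continuous_superposition hf hw₂) (fun t _ => ?_) x.2
  set s := projIcc (0 : ℝ) 1 zero_le_one t
  exact hmono s s.2 ⟨hw₁.2.1 s, hw₁.2.2 s⟩ ⟨hw₂.2.1 s, hw₂.2.2 s⟩ (hle s)

theorem mapsTo_solutionMap (hα : 0 ≤ α) (hδ0 : 0 ≤ δ) (hδ1 : δ < 1) (hη : η ∈ Icc (0 : ℝ) 1)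
    (hu₀ : IsUpperSolution α δ η f u₀) (hv₀ : IsLowerSolution α δ η f v₀)
    (horder : ∀ x ∈ Icc (0 : ℝ) 1, v₀ x ≤ u₀ x)
    (hf : ContinuousOn (fun p : ℝ × ℝ => f p.1 p.2) (strip v₀ u₀))
    (hmono : ∀ x ∈ Icc (0 : ℝ) 1, MonotoneOn (f x) (Icc (v₀ x) (u₀ x))) :
    MapsTo (solutionMap α δ η f) (continuousBand (domRestrict I v₀) (domRestrict I u₀))
      (Icc (domRestrict I v₀) (domRestrict I u₀)) := by
  have hle : domRestrict I v₀ ≤ domRestrict I u₀ := fun x => horder x x.2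
  have hv : domRestrict I v₀ ∈ continuousBand (domRestrict I v₀) (domRestrict I u₀) :=
    ⟨hv₀.isBVPRegular.continuousOn.domRestrict, left_mem_Icc.2 hle⟩
  have hu : domRestrict I u₀ ∈ continuousBand (domRestrict I v₀) (domRestrict I u₀) :=
    ⟨hu₀.isBVPRegular.continuousOn.domRestrict, right_mem_Icc.2 hle⟩
  have hA := monotoneOn_solutionMap hα hδ0 hδ1 hη hf hmono
  intro w hw
  constructor
  · calc domRestrict I v₀ ≤ solutionMap α δ η f (domRestrict I v₀) :=
          le_solutionMap_domRestrict hα hδ0 hδ1 hη hv₀ (continuous_superposition hf hv)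
      _ ≤ solutionMap α δ η f w := hA hv hw hw.2.1
  · calc solutionMap α δ η f w ≤ solutionMap α δ η f (domRestrict I u₀) := hA hw hu hw.2.2
      _ ≤ domRestrict I u₀ :=
          solutionMap_domRestrict_le hα hδ0 hδ1 hη hu₀ (continuous_superposition hf hu)

theorem isCompact_strip (hv₀ : ContinuousOn v₀ (Icc 0 1)) (hu₀ : ContinuousOn u₀ (Icc 0 1)) :
    IsCompact (strip v₀ u₀) := by
  obtain ⟨a, ha⟩ := isCompact_Icc.bddBelow_image hv₀
  obtain ⟨b, hb⟩ := isCompact_Icc.bddAbove_image hu₀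
  set s : Set (ℝ × ℝ) := Icc 0 1 ×ˢ Icc a b
  have hs : IsCompact s := isCompact_Icc.prod isCompact_Icc
  have hfst : MapsTo Prod.fst s (Icc (0 : ℝ) 1) := fun p hp => hp.1
  have lower_closed : IsClosed {p ∈ s | v₀ p.1 ≤ p.2} :=
    hs.isClosed.isClosed_le (hv₀.comp continuousOn_fst hfst) continuousOn_snd
  have upper_closed : IsClosed {p ∈ s | p.2 ≤ u₀ p.1} :=
    hs.isClosed.isClosed_le continuousOn_snd (hu₀.comp continuousOn_fst hfst)
  have strip_eq : strip v₀ u₀ = {p ∈ s | v₀ p.1 ≤ p.2} ∩ {p ∈ s | p.2 ≤ u₀ p.1} := by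
    ext p
    refine ⟨fun hp => ?_, fun hp => ⟨hp.1.1.1, hp.1.2, hp.2.2⟩⟩
    have hps : p ∈ s := ⟨hp.1, (ha (mem_image_of_mem _ hp.1)).trans hp.2.1,
      hp.2.2.trans (hb (mem_image_of_mem _ hp.1))⟩
    exact ⟨⟨hps, hp.2.1⟩, hps, hp.2.2⟩
  rw [strip_eq]
  exact hs.of_isClosed_subset (lower_closed.inter upper_closed) fun p hp => hp.1.1

theorem exists_lipschitzWith_solutionMap (hα : 0 ≤ α) (hv₀ : ContinuousOn v₀ (Icc 0 1))
    (hu₀ : ContinuousOn u₀ (Icc 0 1))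
    (hf : ContinuousOn (fun p : ℝ × ℝ => f p.1 p.2) (strip v₀ u₀)) :
    ∃ K : ℝ≥0, ∀ w ∈ continuousBand (domRestrict I v₀) (domRestrict I u₀),
      LipschitzWith K (solutionMap α δ η f w) := by
  obtain ⟨C, hC⟩ := (isCompact_strip hv₀ hu₀).exists_bound_of_continuousOn hf
  refine ⟨C.toNNReal, fun w hw => lipschitzOnWith_iff_restrict.1 ?_⟩
  refine lipschitzOnWith_threePointSolution hα (continuous_superposition hf hw) fun t => ?_
  set s := projIcc (0 : ℝ) 1 zero_le_one t
  have hs : (↑s, w s) ∈ strip v₀ u₀ := ⟨s.2, hw.2.1 s, hw.2.2 s⟩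
  exact (hC _ hs).trans (Real.le_coe_toNNReal C)

end NonlinearProblem

theorem existence_well_ordered_pos_lambda_general {α δ η : ℝ} (hα : 0 ≤ α) (hδ0 : 0 ≤ δ)
    (hδ1 : δ < 1) (hη : η ∈ Icc (0 : ℝ) 1) {f : ℝ → ℝ → ℝ} {u₀ v₀ : ℝ → ℝ}
    (hu₀ : IsUpperSolution α δ η f u₀) (hv₀ : IsLowerSolution α δ η f v₀)
    (horder : ∀ x ∈ Icc (0 : ℝ) 1, v₀ x ≤ u₀ x)
    (hf : ContinuousOn (fun p : ℝ × ℝ => f p.1 p.2) (strip v₀ u₀))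
    (hmono : ∀ x ∈ Icc (0 : ℝ) 1, MonotoneOn (f x) (Icc (v₀ x) (u₀ x))) :
    ∃ v u : ℝ → ℝ, IsBVPSolution α δ η f v ∧ IsBVPSolution α δ η f u ∧
      (∀ x ∈ Icc (0 : ℝ) 1, v₀ x ≤ v x ∧ v x ≤ u x ∧ u x ≤ u₀ x) ∧
      ∀ z : ℝ → ℝ, IsBVPSolution α δ η f z →
        (∀ x ∈ Icc (0 : ℝ) 1, v₀ x ≤ z x ∧ z x ≤ u₀ x) →
        ∀ x ∈ Icc (0 : ℝ) 1, v x ≤ z x ∧ z x ≤ u x := by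
  have hv₀c := hv₀.isBVPRegular.continuousOn
  have hu₀c := hu₀.isBVPRegular.continuousOn
  obtain ⟨K, hK⟩ := exists_lipschitzWith_solutionMap (δ := δ) (η := η) hα hv₀c hu₀c hf
  obtain ⟨⟨a, ⟨ha, hAa⟩, ha_le⟩, b, ⟨hb, hAb⟩, hb_ge⟩ :=
    exists_isLeast_isGreatest_fixedPoints_continuousBand hv₀c.domRestrict hu₀c.domRestrict
      (fun x => horder x x.2) (mapsTo_solutionMap hα hδ0 hδ1 hη hu₀ hv₀ horder hf hmono) hK
      (monotoneOn_solutionMap hα hδ0 hδ1 hη hf hmono)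
  set v := threePointSolution α δ η (superposition f a)
  set u := threePointSolution α δ η (superposition f b)
  have hv : ∀ x (hx : x ∈ I), v x = a ⟨x, hx⟩ := fun x hx => congrFun hAa ⟨x, hx⟩
  have hu : ∀ x (hx : x ∈ I), u x = b ⟨x, hx⟩ := fun x hx => congrFun hAb ⟨x, hx⟩
  refine ⟨v, u,
    isBVPSolution_of_isFixedPt_solutionMap hα hδ1.ne (continuous_superposition hf ha) hAa,
    isBVPSolution_of_isFixedPt_solutionMap hα hδ1.ne (continuous_superposition hf hb) hAb,
    fun x hx => ?_, fun z hz hband x hx => ?_⟩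
  · rw [hv x hx, hu x hx]
    exact ⟨ha.2.1 ⟨x, hx⟩, ha_le ⟨hb, hAb⟩ ⟨x, hx⟩, hb.2.2 ⟨x, hx⟩⟩
  · have hzb : domRestrict I z ∈ continuousBand (domRestrict I v₀) (domRestrict I u₀) :=
      ⟨hz.1.domRestrict, fun t => (hband t t.2).1, fun t => (hband t t.2).2⟩
    have hAz := hz.isFixedPt_solutionMap hα hδ0 hδ1 hη (continuous_superposition hf hzb)
    rw [hv x hx, hu x hx]
    exact ⟨ha_le ⟨hzb, hAz⟩ ⟨x, hx⟩, hb_ge ⟨hzb, hAz⟩ ⟨x, hx⟩⟩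

/-- **Theorem 5.2 (existence, well-ordered case, positive `λ`).**
For `α ∈ (4n−3, 4n−1)`, `ν = (1−α)/2`, `0 < η < 1`, with `λ, δ` satisfying
`(H₀)`, an upper solution `u₀` and lower solution `v₀` with `v₀ ≤ u₀`, `f`
continuous on `D₁ = {(x,y) : x ∈ [0,1], v₀(x) ≤ y ≤ u₀(x)}` and one-sided
Lipschitz from below with constant `M₂ ≥ 0`, `M₂ − λ ≥ 0`: there are solutions
`v, u` with `v₀ ≤ v ≤ u ≤ u₀`, and every solution `z` in `D₁` satisfies
`v ≤ z ≤ u`. -/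
theorem existence_well_ordered_pos_lambda (n : ℕ) (hn : 1 ≤ n) (α lam δ η ν : ℝ)
    (hα1 : 4 * (n : ℝ) - 3 < α) (hα2 : α < 4 * (n : ℝ) - 1)
    (hν : ν = (1 - α) / 2)
    (hη0 : 0 < η) (hη1 : η < 1)
    (hlam : 0 < lam)
    (hzero : ∀ t : ℝ, 0 < t → t ≤ Real.sqrt lam → besselJ ν t ≠ 0)
    (hδ0 : 0 < δ) (hδ1 : δ < 1)
    (hH1 : 0 ≤ δ * η ^ ν * besselJ ν (η * Real.sqrt lam) - besselJ ν (Real.sqrt lam))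
    (hH2 : 0 < besselJ (-ν) (Real.sqrt lam)
        - δ * η ^ ν * besselJ (-ν) (η * Real.sqrt lam))
    (f : ℝ → ℝ → ℝ) (u₀ v₀ : ℝ → ℝ)
    (hu₀ : IsUpperSolution α δ η f u₀) (hv₀ : IsLowerSolution α δ η f v₀)
    (horder : ∀ x ∈ Set.Icc (0 : ℝ) 1, v₀ x ≤ u₀ x)
    (hfcont : ContinuousOn (fun p : ℝ × ℝ => f p.1 p.2)
      {p : ℝ × ℝ | p.1 ∈ Set.Icc (0 : ℝ) 1 ∧ v₀ p.1 ≤ p.2 ∧ p.2 ≤ u₀ p.1})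
    (M₂ : ℝ) (hM₂ : 0 ≤ M₂)
    (hlip : ∀ x ∈ Set.Icc (0 : ℝ) 1, ∀ y w : ℝ,
      v₀ x ≤ y → y ≤ u₀ x → v₀ x ≤ w → w ≤ u₀ x → y ≤ w →
        M₂ * (w - y) ≤ f x w - f x y)
    (hMlam : 0 ≤ M₂ - lam) :
    ∃ v u : ℝ → ℝ, IsBVPSolution α δ η f v ∧ IsBVPSolution α δ η f u ∧
      (∀ x ∈ Set.Icc (0 : ℝ) 1, v₀ x ≤ v x ∧ v x ≤ u x ∧ u x ≤ u₀ x) ∧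
      ∀ z : ℝ → ℝ, IsBVPSolution α δ η f z →
        (∀ x ∈ Set.Icc (0 : ℝ) 1, v₀ x ≤ z x ∧ z x ≤ u₀ x) →
        ∀ x ∈ Set.Icc (0 : ℝ) 1, v x ≤ z x ∧ z x ≤ u x := by
  have hn' : (1 : ℝ) ≤ n := Nat.one_le_cast.2 hn
  exact existence_well_ordered_pos_lambda_general (by linarith) hδ0.le hδ1 ⟨hη0.le, hη1.le⟩ hu₀ hv₀
    horder hfcont fun x hx y hy w hw hyw => sub_nonneg.1 <|
      (mul_nonneg hM₂ (sub_nonneg.2 hyw)).trans (hlip x hx y w hy.1 hy.2 hw.1 hw.2 hyw)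
end
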